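/- For p ≥ 3, n ≥ 3 and b ≥ 1, the shrinkage function φ(w) defined by φ(w) = w·[∫₀¹ λ^{p/2−1}(log(1/λ))^b (1+wλ)^{−(p+n)/2−1} dλ]/[∫₀¹ λ^{p/2−2}(log(1/λ))^b (1+wλ)^{−(p+n)/2−1} dλ] satisfies lim_{w→∞} (log w)·((p−2)/(n+2) − φ(w)) = 2b(p+n)/(n+2)². -/

import Mathlib

open MeasureTheory Filter

namespace Stmt7Aux

lemma log_bound (a β : ℝ) (ha : 0 < a) (hβ : 0 ≤ β) :
    ∃ C s : ℝ, 0 ≤ C ∧ 0 < s ∧ s ≤ a ∧ ∀ t : ℝ, 0 < t → t ≤ 1 →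
      t ^ (a - 1) * (1 + Real.log (1 / t)) ^ β ≤ C * t ^ (s - 1) := by
  set ε := a / (2 * (β + 1)) with hε
  have hεpos : 0 < ε := by positivity
  have hεβ : ε * β < a := by
    rw [hε, div_mul_eq_mul_div, div_lt_iff₀ (by positivity)]
    nlinarith [mul_nonneg ha.le hβ]
  refine ⟨(Real.exp ε / ε) ^ β, a - ε * β, by positivity, by linarith,
    by nlinarith [mul_nonneg hεpos.le hβ], ?_⟩
  intro t ht ht1
  have h1 : Real.log (Real.exp 1 / t) = 1 + Real.log (1 / t) := by
    rw [Real.log_div (Real.exp_ne_zero _) ht.ne', Real.log_exp, Real.log_div one_ne_zero ht.ne',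
      Real.log_one]
    ring
  have h2 := Real.log_le_rpow_div (x := Real.exp 1 / t) (by positivity) hεpos
  rw [h1] at h2
  have h0 : 0 ≤ Real.log (1 / t) := Real.log_nonneg (by rw [le_div_iff₀ ht]; linarith)
  have h3 := Real.rpow_le_rpow (by linarith) h2 hβ
  have h4 : ((Real.exp 1 / t) ^ ε / ε) ^ β = (Real.exp ε / ε) ^ β * t ^ (-(ε * β)) := by
    rw [Real.div_rpow (by positivity) ht.le, ← Real.exp_mul, one_mul, div_right_comm,
      Real.div_rpow (by positivity) (by positivity), ← Real.rpow_mul ht.le, Real.rpow_neg ht.le]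
    rfl
  rw [h4] at h3
  calc _ ≤ t ^ (a - 1) * ((Real.exp ε / ε) ^ β * t ^ (-(ε * β))) := by gcongr
    _ = (Real.exp ε / ε) ^ β * (t ^ (a - 1) * t ^ (-(ε * β))) := by ring
    _ = _ := by rw [← Real.rpow_add ht]; congr 2; ring

lemma beta_int (s k : ℝ) (hs : 0 < s) (hk : s < k) :
    IntegrableOn (fun t : ℝ => t ^ (s - 1) * (1 + t) ^ (-k)) (Set.Ioi 0) := by
  have hm : Measurable (fun t : ℝ => t ^ (s - 1) * (1 + t) ^ (-k)) := by fun_prop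
  rw [← Set.Ioc_union_Ioi_eq_Ioi (zero_le_one (α := ℝ))]
  apply IntegrableOn.union
  · have h := (intervalIntegral.intervalIntegrable_rpow' (a := 0) (b := 1) (r := s - 1)
      (by linarith))
    rw [intervalIntegrable_iff_integrableOn_Ioc_of_le zero_le_one] at h
    refine Integrable.mono' h hm.aestronglyMeasurable ?_
    filter_upwards [ae_restrict_mem measurableSet_Ioc] with t ht
    have h0 : 0 < t := ht.1
    rw [Real.norm_of_nonneg (by positivity)]
    have : (1 + t) ^ (-k) ≤ 1 := Real.rpow_le_one_of_one_le_of_nonpos (by linarith) (by linarith)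
    nlinarith [Real.rpow_nonneg h0.le (s - 1)]
  · have h := integrableOn_Ioi_rpow_of_lt (a := s - 1 - k) (c := 1) (by linarith) one_pos
    refine Integrable.mono' h hm.aestronglyMeasurable ?_
    filter_upwards [ae_restrict_mem measurableSet_Ioi] with t ht
    have h0 : 0 < t := lt_trans one_pos ht
    rw [Real.norm_of_nonneg (by positivity), sub_eq_add_neg (s - 1) k, Real.rpow_add h0]
    have : (1 + t) ^ (-k) ≤ t ^ (-k) :=
      Real.rpow_le_rpow_of_nonpos h0 (by linarith) (by linarith)
    gcongr

lemma beta_pos (s k : ℝ) (hs : 0 < s) (hk : s < k) :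
    0 < ∫ t in Set.Ioi (0:ℝ), t ^ (s - 1) * (1 + t) ^ (-k) := by
  rw [setIntegral_pos_iff_support_of_nonneg_ae _ (beta_int s k hs hk)]
  · have : Set.Ioi (0:ℝ) ⊆ Function.support (fun t : ℝ => t ^ (s - 1) * (1 + t) ^ (-k)) := by
      intro t ht
      have h0 : 0 < t := ht
      exact (by positivity : 0 < t ^ (s - 1) * (1 + t) ^ (-k)).ne'
    rw [Set.inter_eq_right.2 this]
    simp
  · filter_upwards [ae_restrict_mem measurableSet_Ioi] with t ht
    have h0 : 0 < t := ht
    simp only [Pi.zero_apply]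
    positivity

noncomputable def f (a β k w l : ℝ) : ℝ :=
  l ^ (a - 1) * Real.log (1 / l) ^ β * (1 + w * l) ^ (-k)

noncomputable def J (a β k w : ℝ) : ℝ := ∫ l in Set.Ioo (0:ℝ) 1, f a β k w l

lemma f_meas (a β k w : ℝ) : Measurable (f a β k w) := by unfold f; fun_prop

lemma f_int (a β k w : ℝ) (ha : 0 < a) (hβ : 0 ≤ β) (hk : 0 ≤ k) (hw : 0 < w) :
    IntegrableOn (f a β k w) (Set.Ioo 0 1) := by
  obtain ⟨C, s, hC, hs, -, hb⟩ := log_bound a β ha hβ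
  have h := (intervalIntegral.intervalIntegrable_rpow' (a := 0) (b := 1) (r := s - 1)
      (by linarith))
  rw [intervalIntegrable_iff_integrableOn_Ioo_of_le zero_le_one] at h
  refine Integrable.mono' (h.const_mul C) (f_meas _ _ _ _).aestronglyMeasurable ?_
  filter_upwards [ae_restrict_mem measurableSet_Ioo] with t ht
  have h0 : 0 < t := ht.1
  have hL : 0 ≤ Real.log (1 / t) := Real.log_nonneg (by rw [le_div_iff₀ h0]; linarith [ht.2])
  unfold f
  rw [Real.norm_of_nonneg (by positivity)]
  have h1 : (1 + w * t) ^ (-k) ≤ 1 :=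
    Real.rpow_le_one_of_one_le_of_nonpos (by nlinarith [mul_pos hw h0]) (by linarith)
  calc _ ≤ t ^ (a - 1) * Real.log (1 / t) ^ β * 1 := by gcongr
    _ ≤ t ^ (a - 1) * (1 + Real.log (1 / t)) ^ β := by
      rw [mul_one]; gcongr; linarith
    _ ≤ _ := hb t h0 ht.2.le

lemma J_resc (a β k w : ℝ) (hw : 0 < w) :
    w ^ a / Real.log w ^ β * J a β k w = ∫ t in Set.Ioi (0:ℝ),
      w ^ (a - 1) / Real.log w ^ β * (Set.Iio 1).indicator (f a β k w) (w⁻¹ * t) := by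
  rw [integral_const_mul, integral_comp_mul_left_Ioi _ _ (inv_pos.2 hw), mul_zero, inv_inv,
    setIntegral_indicator measurableSet_Iio, Set.Ioi_inter_Iio, smul_eq_mul]
  unfold J
  rw [Real.rpow_sub_one hw.ne']
  field_simp

lemma f_resc (a β k w t : ℝ) (hw : 1 < w) (ht : 0 < t) (htw : t < w) :
    w ^ (a - 1) / Real.log w ^ β * (Set.Iio 1).indicator (f a β k w) (w⁻¹ * t)
      = t ^ (a - 1) * (1 - Real.log t / Real.log w) ^ β * (1 + t) ^ (-k) := by
  have hw0 : 0 < w := by linarith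
  have hlw : 0 < Real.log w := Real.log_pos hw
  have hl : Real.log t < Real.log w := Real.log_lt_log ht htw
  have hmem : w⁻¹ * t ∈ Set.Iio (1:ℝ) := by
    rw [Set.mem_Iio, inv_mul_lt_iff₀ hw0]; linarith
  rw [Set.indicator_of_mem hmem]
  unfold f
  have e1 : Real.log (1 / (w⁻¹ * t)) = Real.log w * (1 - Real.log t / Real.log w) := by
    rw [one_div, Real.log_inv, Real.log_mul (by positivity) ht.ne', Real.log_inv]
    field_simp
    ring
  have e2 : 0 ≤ 1 - Real.log t / Real.log w := by
    rw [sub_nonneg, div_le_one hlw]; exact hl.le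
  rw [e1, Real.mul_rpow hlw.le e2, Real.mul_rpow (by positivity) ht.le, mul_inv_cancel_left₀ hw0.ne',
    Real.inv_rpow hw0.le]
  have : 0 < Real.log w ^ β := by positivity
  have : 0 < w ^ (a - 1) := by positivity
  field_simp

lemma J_lim (a β k : ℝ) (ha : 0 < a) (hβ : 0 ≤ β) (hk : a < k) :
    Tendsto (fun w => w ^ a / Real.log w ^ β * J a β k w) atTop
      (nhds (∫ t in Set.Ioi (0:ℝ), t ^ (a - 1) * (1 + t) ^ (-k))) := by
  obtain ⟨C, s, hC, hs, hsa, hb⟩ := log_bound a β ha hβ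
  have key : Tendsto (fun w : ℝ => ∫ t in Set.Ioi (0:ℝ),
      w ^ (a - 1) / Real.log w ^ β * (Set.Iio 1).indicator (f a β k w) (w⁻¹ * t)) atTop
      (nhds (∫ t in Set.Ioi (0:ℝ), t ^ (a - 1) * (1 + t) ^ (-k))) := by
    refine tendsto_integral_filter_of_dominated_convergence
      (fun t => t ^ (a - 1) * (1 + t) ^ (-k) + C * (t ^ (s - 1) * (1 + t) ^ (-k))) ?_ ?_ ?_ ?_
    · refine Eventually.of_forall fun w => Measurable.aestronglyMeasurable ?_
      exact (((f_meas a β k w).indicator measurableSet_Iio).comp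
        (measurable_const_mul w⁻¹)).const_mul _
    · filter_upwards [eventually_ge_atTop (Real.exp 1)] with w hw
      have hw1 : 1 < w := lt_of_lt_of_le (by simp) hw
      have hw0 : 0 < w := by linarith
      have hlw : 1 ≤ Real.log w := by rwa [Real.le_log_iff_exp_le hw0]
      filter_upwards [ae_restrict_mem measurableSet_Ioi] with t ht
      have ht : 0 < t := ht
      have p1 : 0 ≤ t ^ (a - 1) * (1 + t) ^ (-k) := by positivity
      have p2 : 0 ≤ C * (t ^ (s - 1) * (1 + t) ^ (-k)) := by positivity
      rcases lt_or_ge t w with htw | htw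
      · rw [f_resc a β k w t hw1 ht htw]
        have hl : Real.log t < Real.log w := Real.log_lt_log ht htw
        have e2 : 0 ≤ 1 - Real.log t / Real.log w := by
          rw [sub_nonneg, div_le_one (by linarith)]; exact hl.le
        rw [Real.norm_of_nonneg (by positivity)]
        rcases le_or_gt t 1 with h1 | h1
        · have hlt : Real.log t ≤ 0 := Real.log_nonpos ht.le h1
          have e3 : 1 - Real.log t / Real.log w ≤ 1 + Real.log (1 / t) := by
            rw [one_div, Real.log_inv]
            have : Real.log t ≤ Real.log t / Real.log w := by
              rw [le_div_iff₀ (by linarith)]; nlinarith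
            linarith
          have := hb t ht h1
          calc _ ≤ t ^ (a - 1) * (1 + Real.log (1 / t)) ^ β * (1 + t) ^ (-k) := by gcongr
            _ ≤ C * t ^ (s - 1) * (1 + t) ^ (-k) := by gcongr
            _ ≤ _ := by linarith
        · have hlt : 0 ≤ Real.log t / Real.log w :=
            div_nonneg (Real.log_nonneg h1.le) (by linarith)
          have : (1 - Real.log t / Real.log w) ^ β ≤ 1 :=
            Real.rpow_le_one e2 (by linarith) hβ
          calc _ ≤ t ^ (a - 1) * 1 * (1 + t) ^ (-k) := by gcongr
            _ ≤ _ := by linarith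
      · rw [Set.indicator_of_notMem]
        · simp only [mul_zero, norm_zero]; linarith
        · rw [Set.mem_Iio, not_lt, le_inv_mul_iff₀ hw0]; linarith
    · exact (beta_int a k ha hk).add ((beta_int s k hs (by linarith)).const_mul C)
    · filter_upwards [ae_restrict_mem measurableSet_Ioi] with t ht
      have ht : 0 < t := ht
      have h1 : Tendsto (fun w => t ^ (a - 1) * (1 - Real.log t / Real.log w) ^ β * (1 + t) ^ (-k))
          atTop (nhds (t ^ (a - 1) * (1 - 0) ^ β * (1 + t) ^ (-k))) := by
        have h2 : Tendsto (fun w => Real.log t / Real.log w) atTop (nhds 0) :=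
          Real.tendsto_log_atTop.const_div_atTop _
        exact (((h2.const_sub 1).rpow_const (Or.inr hβ)).const_mul _).mul_const _
      rw [sub_zero, Real.one_rpow, mul_one] at h1
      refine h1.congr' ?_
      filter_upwards [eventually_gt_atTop 1, eventually_gt_atTop t] with w hw htw
      exact (f_resc a β k w t hw ht htw).symm
  refine key.congr' ?_
  filter_upwards [eventually_gt_atTop 0] with w hw
  exact (J_resc a β k w hw).symm

lemma ibp (a b k w : ℝ) (ha : 0 < a) (hb : 1 ≤ b) (hk : 0 ≤ k) (hw : 0 < w) :
    a * (J a b k w + w * J (a + 1) b k w) - b * (J a (b - 1) k w + w * J (a + 1) (b - 1) k w)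
      - w * (k - 1) * J (a + 1) b k w = 0 := by
  have i1 := f_int a b k w ha (by linarith) hk hw
  have i2 := f_int (a + 1) b k w (by linarith) (by linarith) hk hw
  have i3 := f_int a (b - 1) k w ha (by linarith) hk hw
  have i4 := f_int (a + 1) (b - 1) k w (by linarith) (by linarith) hk hw
  have A1 := (i1.add (i2.const_mul w)).const_mul a
  have A2 := (i3.add (i4.const_mul w)).const_mul b
  have A3 := i2.const_mul (w * (k - 1))
  have T := (A1.sub A2).sub A3
  have hint : ∫ l in (0:ℝ)..1, (a * (f a b k w l + w * f (a + 1) b k w l)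
      - b * (f a (b - 1) k w l + w * f (a + 1) (b - 1) k w l)
      - w * (k - 1) * f (a + 1) b k w l) = 0 - 0 := by
    apply intervalIntegral.integral_eq_sub_of_hasDerivAt_of_tendsto
      (f := fun l => l ^ a * Real.log (1 / l) ^ b * (1 + w * l) ^ (1 - k)) zero_lt_one
    · intro l hl
      have h0 : 0 < l := hl.1
      have hL : 0 < Real.log (1 / l) := Real.log_pos (by rw [lt_div_iff₀ h0]; linarith [hl.2])
      have hwl : 0 < 1 + w * l := by positivity
      have d1 : HasDerivAt (fun l : ℝ => l ^ a) (a * l ^ (a - 1)) l :=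
        Real.hasDerivAt_rpow_const (Or.inl h0.ne')
      have d2 : HasDerivAt (fun l : ℝ => Real.log (1 / l)) (-l⁻¹) l := by
        have := (Real.hasDerivAt_log h0.ne').neg
        refine this.congr_of_eventuallyEq (Eventually.of_forall fun x => ?_)
        simp [Real.log_inv]
      have d3 := d2.rpow_const (p := b) (Or.inl hL.ne')
      have d4 : HasDerivAt (fun l : ℝ => 1 + w * l) w l := by
        simpa using ((hasDerivAt_id l).const_mul w).const_add 1
      have d5 := d4.rpow_const (p := 1 - k) (Or.inl hwl.ne')
      refine ((d1.mul d3).mul d5).congr_deriv ?_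
      unfold f
      have r1 : l ^ a = l ^ (a - 1) * l := by
        rw [Real.rpow_sub_one h0.ne']; field_simp
      have r2 : (1 + w * l) ^ (1 - k) = (1 + w * l) * (1 + w * l) ^ (-k) := by
        rw [sub_eq_add_neg, Real.rpow_add hwl, Real.rpow_one]
      rw [show (1 - k - 1) = -k by ring, add_sub_cancel_right]
      simp only [Pi.mul_apply]
      rw [r2, r1]
      field_simp
      ring
    · rw [intervalIntegrable_iff_integrableOn_Ioc_of_le zero_le_one,
        integrableOn_Ioc_iff_integrableOn_Ioo]
      exact T
    · have h1 : Tendsto (fun l : ℝ => -(Real.log l * l ^ (a / b))) (nhdsWithin 0 (Set.Ioi 0))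
          (nhds 0) := by
        simpa using (tendsto_log_mul_rpow_nhdsGT_zero (r := a / b) (by positivity)).neg
      have h2 := h1.rpow_const (p := b) (Or.inr (by linarith))
      rw [Real.zero_rpow (by linarith)] at h2
      have h3 : Tendsto (fun l : ℝ => (1 + w * l) ^ (1 - k)) (nhdsWithin 0 (Set.Ioi 0))
          (nhds 1) := by
        have : ContinuousAt (fun l : ℝ => (1 + w * l) ^ (1 - k)) 0 :=
          ContinuousAt.rpow_const (by fun_prop) (Or.inl (by simp))
        have := this.tendsto
        simp only [mul_zero, add_zero, Real.one_rpow] at this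
        exact this.mono_left nhdsWithin_le_nhds
      have h4 := h2.mul h3
      rw [zero_mul] at h4
      refine h4.congr' ?_
      filter_upwards [Ioo_mem_nhdsGT (zero_lt_one (α := ℝ))] with l hl
      have h0 : 0 < l := hl.1
      have hL : 0 ≤ -Real.log l := by linarith [Real.log_neg h0 hl.2]
      rw [one_div, Real.log_inv, ← neg_mul, Real.mul_rpow hL (by positivity), ← Real.rpow_mul h0.le,
        div_mul_cancel₀ _ (by linarith)]
      ring
    · have : ContinuousAt (fun l : ℝ => l ^ a * Real.log (1 / l) ^ b * (1 + w * l) ^ (1 - k)) 1 := by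
        refine ContinuousAt.mul (ContinuousAt.mul ?_ ?_) ?_
        · exact continuousAt_id.rpow_const (Or.inl one_ne_zero)
        · refine ContinuousAt.rpow_const ?_ (Or.inr (by linarith))
          refine ContinuousAt.log ?_ (by norm_num)
          exact continuousAt_const.div continuousAt_id one_ne_zero
        · exact ContinuousAt.rpow_const (by fun_prop) (Or.inl (by positivity))
      have := this.tendsto
      simp only [div_one, Real.log_one, Real.zero_rpow (show b ≠ 0 by linarith), mul_zero,
        zero_mul] at this
      exact this.mono_left nhdsWithin_le_nhds
  rw [intervalIntegral.integral_of_le zero_le_one, integral_Ioc_eq_integral_Ioo] at hint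
  have e1 := integral_sub (A1.sub A2) A3
  have e2 := integral_sub A1 A2
  simp only [Pi.add_apply, Pi.sub_apply] at e1 e2
  rw [e1, e2] at hint
  have e3 := integral_add i1 (i2.const_mul w)
  have e4 := integral_add i3 (i4.const_mul w)
  simp only [integral_const_mul] at hint e3 e4
  rw [e3, e4] at hint
  unfold J
  linarith

end Stmt7Aux

open Stmt7Aux in
/-- For p ≥ 3, n ≥ 3 and b ≥ 1, the unknown-variance shrinkage function φ satisfies
lim_{w→∞} (log w)·((p−2)/(n+2) − φ(w)) = 2b(p+n)/(n+2)². -/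
theorem stmt7 (p n : ℝ) (hp : 3 ≤ p) (hn : 3 ≤ n) (b : ℝ) (hb : 1 ≤ b)
    (φ : ℝ → ℝ)
    (hφ : ∀ w > (0 : ℝ), φ w = w *
      ((∫ l in Set.Ioo (0 : ℝ) 1,
          l ^ (p / 2 - 1) * Real.log (1 / l) ^ b * (1 + w * l) ^ (-(p + n) / 2 - 1)) /
        (∫ l in Set.Ioo (0 : ℝ) 1,
          l ^ (p / 2 - 2) * Real.log (1 / l) ^ b * (1 + w * l) ^ (-(p + n) / 2 - 1)))) :
    Tendsto (fun w : ℝ => Real.log w * ((p - 2) / (n + 2) - φ w))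
      atTop (nhds (2 * b * (p + n) / (n + 2) ^ 2)) := by
  set a := p / 2 - 1 with ha
  set k := (p + n) / 2 + 1 with hk
  have ha0 : 0 < a := by linarith
  have hφ' : ∀ w > (0:ℝ), φ w = w * (J (a + 1) b k w / J a b k w) := by
    intro w hw
    rw [hφ w hw]
    unfold J f
    rw [show (-(p + n) / 2 - 1) = -k by rw [hk]; ring, show p / 2 - 2 = a - 1 by rw [ha]; ring,
      add_sub_cancel_right]
  set G := ∫ t in Set.Ioi (0:ℝ), t ^ (a - 1) * (1 + t) ^ (-k) with hG
  set H := ∫ t in Set.Ioi (0:ℝ), t ^ (a + 1 - 1) * (1 + t) ^ (-k) with hH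
  have hGpos : 0 < G := beta_pos a k ha0 (by linarith)
  have LD := J_lim a b k ha0 (by linarith) (by linarith)
  have LN := J_lim (a + 1) b k (by linarith) (by linarith) (by linarith)
  have LD' := J_lim a (b - 1) k ha0 (by linarith) (by linarith)
  have LN' := J_lim (a + 1) (b - 1) k (by linarith) (by linarith) (by linarith)
  rw [← hG] at LD LD'
  rw [← hH] at LN LN'
  -- limit of the E ratio
  have LE : Tendsto (fun w => Real.log w * ((J a (b - 1) k w + w * J (a + 1) (b - 1) k w)
      / J a b k w)) atTop (nhds ((G + H) / G)) := by
    refine ((LD'.add LN').div LD hGpos.ne').congr' ?_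
    filter_upwards [eventually_gt_atTop 1] with w hw
    have hw0 : 0 < w := by linarith
    have hl := Real.log_pos hw
    have : 0 < w ^ a := by positivity
    have : 0 < Real.log w ^ b := by positivity
    simp only [Pi.div_apply]
    rw [Real.rpow_add_one hw0.ne', Real.rpow_sub_one hl.ne']
    rcases eq_or_ne (J a b k w) 0 with h | h
    · simp [h]
    · field_simp
  have Lφ : Tendsto φ atTop (nhds (H / G)) := by
    refine (LN.div LD hGpos.ne').congr' ?_
    filter_upwards [eventually_gt_atTop 1] with w hw
    have hw0 : 0 < w := by linarith
    have hl := Real.log_pos hw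
    have : 0 < w ^ a := by positivity
    have : 0 < Real.log w ^ b := by positivity
    simp only [Pi.div_apply]
    rw [hφ' w hw0, Real.rpow_add_one hw0.ne']
    rcases eq_or_ne (J a b k w) 0 with h | h
    · simp [h]
    · field_simp
  have hDne : ∀ᶠ w in atTop, J a b k w ≠ 0 := by
    filter_upwards [LD.eventually_ne hGpos.ne'] with w hw h
    exact hw (by rw [h, mul_zero])
  have hid : ∀ᶠ w in atTop, (p - 2) / (n + 2) - φ w = 2 * b / (n + 2) *
      ((J a (b - 1) k w + w * J (a + 1) (b - 1) k w) / J a b k w) := by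
    filter_upwards [hDne, eventually_gt_atTop 0] with w hD hw
    have h := ibp a b k w ha0 hb (by linarith) hw
    rw [hφ' w hw]
    have hn2 : n + 2 ≠ 0 := by linarith
    field_simp
    have e1 : p - 2 = 2 * a := by rw [ha]; ring
    have e2 : n + 2 = 2 * (k - 1 - a) := by rw [ha, hk]; ring
    rw [e1, e2]
    linarith
  have L0 : Tendsto (fun w => (p - 2) / (n + 2) - φ w) atTop (nhds 0) := by
    have h1 := (LE.const_mul (2 * b / (n + 2))).mul (Real.tendsto_log_atTop.inv_tendsto_atTop)
    rw [mul_zero] at h1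
    refine h1.congr' ?_
    filter_upwards [hid, eventually_gt_atTop 1] with w h hw
    have hl := Real.log_pos hw
    rw [h, Pi.inv_apply]
    field_simp
  have hHG : H / G = (p - 2) / (n + 2) := by
    have := tendsto_nhds_unique L0 (Lφ.const_sub ((p - 2) / (n + 2)))
    linarith
  have hfin := LE.const_mul (2 * b / (n + 2))
  have hval : 2 * b / (n + 2) * ((G + H) / G) = 2 * b * (p + n) / (n + 2) ^ 2 := by
    rw [add_div, div_self hGpos.ne', hHG]
    have hn2 : n + 2 ≠ 0 := by linarith
    field_simp
    ring
  rw [hval] at hfin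
  refine hfin.congr' ?_
  filter_upwards [hid] with w h
  rw [h]
  ring
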